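/- Let B be a binary doubly even [37,6,12] code such that the dual code B⊥ has minimum Hamming weight 3. Then the weight enumerator of B is W_B(y) = 1 + y¹² + 17y¹⁶ + 45y²⁰, and B⊥ has exactly 140 codewords of weight 3. -/

import Mathlib

noncomputable section

/-- The dual code `B⊥ = {x ∈ F₂ⁿ : x·y = 0 for all y ∈ B}`. -/
def dualCode {n : ℕ} (B : Submodule (ZMod 2) (Fin n → ZMod 2)) : Set (Fin n → ZMod 2) :=
  {x | ∀ y ∈ B, ∑ i, x i * y i = 0}

/-- A binary code is doubly even if every codeword has Hamming weight divisible by 4. -/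
def IsDoublyEven {n : ℕ} (B : Submodule (ZMod 2) (Fin n → ZMod 2)) : Prop :=
  ∀ c ∈ B, 4 ∣ hammingNorm c

/-- A set of binary words has minimum weight `d`:
`d` is the least Hamming weight among its nonzero elements. -/
def HasMinWeight {n : ℕ} (S : Set (Fin n → ZMod 2)) (d : ℕ) : Prop :=
  IsLeast {w : ℕ | ∃ c ∈ S, c ≠ 0 ∧ hammingNorm c = w} d

/-- The number of words of Hamming weight `w` in `S`. -/
def weightCount {n : ℕ} (S : Set (Fin n → ZMod 2)) (w : ℕ) : ℕ :=
  Set.ncard {c ∈ S | hammingNorm c = w}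

/-!
Orthogonality of the characters `c ↦ (-1) ^ (x ⬝ᵥ c)` of `B` gives the MacWilliams identities,
which express the number of words of weight `j` in `B⊥` through the Krawtchouk values `K_j(wt c)`,
`c ∈ B`. As `B⊥` has no words of weight 1 or 2, the cases `j = 1, 2` determine the first two moments
of the weights of `B`, and for `n = 37`, `|B| = 64` they yield `∑ (wt c - 16) * (wt c - 20) = 352`.
No summand is negative, because the weights are divisible by 4, while the zero word contributes 320
and a word of weight 12 contributes 32. So all other words have weight 16 or 20. Their numbers then
follow from `|B| = 64` and the first moment, and the number of words of weight 3 in `B⊥` from the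
case `j = 3`.
-/

open Finset Polynomial

section SignCharacter

/-- The nontrivial character `a ↦ (-1) ^ a` of `𝔽₂`, with integer values. -/
def signChar : AddChar (ZMod 2) ℤ := AddChar.zmodChar 2 neg_one_sq

lemma signChar_one : signChar 1 = -1 := rfl

lemma signChar_eq_one_iff {a : ZMod 2} : signChar a = 1 ↔ a = 0 := by
  revert a; decide

lemma one_add_signChar_mul {R : Type*} [CommRing R] (a : ZMod 2) (z : R) :
    1 + (signChar a : R) * z = if a ≠ 0 then 1 - z else 1 + z := by
  obtain rfl | rfl : a = 0 ∨ a = 1 := by revert a; decide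
  · simp
  · simp [signChar_one, sub_eq_add_neg]

variable {ι : Type*} [Fintype ι]

lemma prod_ite_ne_zero {M : Type*} [CommMonoid M] (c : ι → ZMod 2) (a b : M) :
    ∏ i, (if c i ≠ 0 then a else b) =
      a ^ hammingNorm c * b ^ (Fintype.card ι - hammingNorm c) := by
  classical
  rw [prod_ite, prod_const, prod_const, filter_not (c · ≠ 0),
    card_sdiff_of_subset (filter_subset _ _), card_univ, hammingNorm]

lemma signChar_dotProduct (x c : ι → ZMod 2) :
    signChar (x ⬝ᵥ c) = ∏ i, signChar (x i * c i) :=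
  map_prod signChar.toMonoidHom (fun i => Multiplicative.ofAdd (x i * c i)) univ

lemma sum_signChar_dotProduct_mul_pow_hammingNorm [DecidableEq ι] {R : Type*} [CommRing R]
    (c : ι → ZMod 2) (z : R) :
    ∑ x : ι → ZMod 2, (signChar (x ⬝ᵥ c) : R) * z ^ hammingNorm x =
      (1 - z) ^ hammingNorm c * (1 + z) ^ (Fintype.card ι - hammingNorm c) := by
  have factor (x : ι → ZMod 2) : (signChar (x ⬝ᵥ c) : R) * z ^ hammingNorm x =
      ∏ i, (signChar (x i * c i) : R) * if x i ≠ 0 then z else 1 := by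
    rw [prod_mul_distrib, prod_ite_ne_zero, one_pow, mul_one, signChar_dotProduct, Int.cast_prod]
  have sum_coordinate (i : ι) :
      ∑ a : ZMod 2, (signChar (a * c i) : R) * (if a ≠ 0 then z else 1) =
        if c i ≠ 0 then 1 - z else 1 + z := by
    rw [← one_add_signChar_mul, show (univ : Finset (ZMod 2)) = {0, 1} from rfl]
    simp
  calc ∑ x : ι → ZMod 2, (signChar (x ⬝ᵥ c) : R) * z ^ hammingNorm x
      = ∏ i, ∑ a : ZMod 2, (signChar (a * c i) : R) * if a ≠ 0 then z else 1 := by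
        rw [prod_univ_sum, Fintype.piFinset_univ]
        exact sum_congr rfl fun x _ => factor x
    _ = (1 - z) ^ hammingNorm c * (1 + z) ^ (Fintype.card ι - hammingNorm c) := by
        simp only [sum_coordinate, prod_ite_ne_zero]

end SignCharacter

section Krawtchouk

/-- The value at `w` of the binary Krawtchouk polynomial of degree `j` for length `n`, encoded as
the coefficient of `X ^ j` in `(1 - X) ^ w * (1 + X) ^ (n - w)`; it is meant for `w ≤ n`, since the
subtraction truncates. -/
def krawtchouk (n j w : ℕ) : ℤ :=
  ((1 - X : ℤ[X]) ^ w * (1 + X) ^ (n - w)).coeff j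

lemma mul_derivative_pow {R : Type*} [CommSemiring R] (p : R[X]) (m : ℕ) :
    p * derivative (p ^ m) = (m : R[X]) * p ^ m * derivative p := by
  cases m with
  | zero => simp
  | succ m =>
    rw [derivative_pow_succ]
    simp only [map_add, map_natCast, map_one, Nat.cast_add, Nat.cast_one]
    ring

lemma one_sub_X_sq_mul_derivative_pow_mul_pow {R : Type*} [CommRing R] (a b : ℕ) :
    (1 - X ^ 2) * derivative ((1 - X : R[X]) ^ a * (1 + X) ^ b) =
      ((b : R[X]) - (a : R[X]) - ((a : R[X]) + (b : R[X])) * X) * ((1 - X) ^ a * (1 + X) ^ b) := by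
  have deriv_sub := mul_derivative_pow (1 - X : R[X]) a
  have deriv_add := mul_derivative_pow (1 + X : R[X]) b
  simp only [derivative_sub, derivative_add, derivative_one, derivative_X] at deriv_sub deriv_add
  rw [derivative_mul]
  linear_combination (1 + X) ^ (b + 1) * deriv_sub + (1 - X) ^ (a + 1) * deriv_add

variable {n w : ℕ}

lemma krawtchouk_zero (n w : ℕ) : krawtchouk n 0 w = 1 := by
  simp [krawtchouk, coeff_zero_eq_eval_zero]

lemma krawtchouk_one (hw : w ≤ n) : krawtchouk n 1 w = n - 2 * w := by
  have constant_coeff := krawtchouk_zero n w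
  obtain ⟨b, rfl⟩ := Nat.exists_eq_add_of_le hw
  have ode := one_sub_X_sq_mul_derivative_pow_mul_pow (R := ℤ) w b
  simp only [krawtchouk, Nat.add_sub_cancel_left] at constant_coeff ⊢
  generalize (1 - X : ℤ[X]) ^ w * (1 + X) ^ b = f at ode constant_coeff ⊢
  have ode_coeff : f.coeff 1 = b - w := by
    simpa [mul_coeff_zero, coeff_derivative, constant_coeff] using congrArg (coeff · 0) ode
  push_cast
  linear_combination ode_coeff

lemma krawtchouk_recurrence (hw : w ≤ n) (j : ℕ) :
    (j + 2) * krawtchouk n (j + 2) w =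
      (n - 2 * w) * krawtchouk n (j + 1) w - (n - j) * krawtchouk n j w := by
  obtain ⟨b, rfl⟩ := Nat.exists_eq_add_of_le hw
  have ode := one_sub_X_sq_mul_derivative_pow_mul_pow (R := ℤ) w b
  simp only [krawtchouk, Nat.add_sub_cancel_left]
  generalize (1 - X : ℤ[X]) ^ w * (1 + X) ^ b = f at ode ⊢
  have coeff_X_mul_derivative : (X * derivative f).coeff j = f.coeff j * j := by
    cases j <;> simp [coeff_derivative]
  have ode_coeff := congrArg (coeff · (j + 1)) ode
  simp only [sub_mul, one_mul, add_mul, coeff_sub, coeff_add, sq, mul_assoc, coeff_X_mul,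
    coeff_X_mul_derivative, coeff_derivative, coeff_natCast_mul] at ode_coeff
  push_cast at ode_coeff ⊢
  linear_combination ode_coeff

lemma two_mul_krawtchouk_two (hw : w ≤ n) :
    2 * krawtchouk n 2 w = ((n : ℤ) - 2 * w) ^ 2 - n := by
  have h := krawtchouk_recurrence hw 0
  rw [zero_add, krawtchouk_one hw, krawtchouk_zero] at h
  linear_combination h

lemma six_mul_krawtchouk_three (hw : w ≤ n) :
    6 * krawtchouk n 3 w = ((n : ℤ) - 2 * w) ^ 3 - (3 * n - 2) * (n - 2 * w) := by
  have h := krawtchouk_recurrence hw 1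
  rw [krawtchouk_one hw] at h
  push_cast at h
  linear_combination 2 * h + ((n : ℤ) - 2 * w) * two_mul_krawtchouk_two hw

lemma sum_signChar_dotProduct_filter_hammingNorm {ι : Type*} [Fintype ι] [DecidableEq ι]
    (c : ι → ZMod 2) (j : ℕ) :
    ∑ x : ι → ZMod 2 with hammingNorm x = j, signChar (x ⬝ᵥ c) =
      krawtchouk (Fintype.card ι) j (hammingNorm c) := by
  rw [krawtchouk, ← sum_signChar_dotProduct_mul_pow_hammingNorm c (X : ℤ[X]), finsetSum_coeff,
    sum_filter]
  refine sum_congr rfl fun x _ => ?_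
  rw [← C_eq_intCast, Int.cast_id, coeff_C_mul_X_pow]
  simp only [eq_comm (a := j)]

end Krawtchouk

section WeightCount

variable {n : ℕ} {S : Set (Fin n → ZMod 2)} {w : ℕ}

lemma hammingNorm_le (c : Fin n → ZMod 2) : hammingNorm c ≤ n :=
  hammingNorm_le_card_fintype.trans_eq (Fintype.card_fin n)

lemma weightCount_eq_card_filter (S : Set (Fin n → ZMod 2)) [DecidablePred (· ∈ S)] (w : ℕ) :
    weightCount S w = #{c | c ∈ S ∧ hammingNorm c = w} := by
  rw [weightCount, ← Set.ncard_coe_finset, coe_filter_univ]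

lemma weightCount_eq_one {c : Fin n → ZMod 2} (hc : c ∈ S) (hcw : hammingNorm c = w)
    (unique : ∀ d ∈ S, hammingNorm d = w → d = c) : weightCount S w = 1 :=
  Set.ncard_eq_one.2 ⟨c, Set.eq_singleton_iff_unique_mem.2
    ⟨⟨hc, hcw⟩, fun d hd => unique d hd.1 hd.2⟩⟩

lemma weightCount_zero (hS : 0 ∈ S) : weightCount S 0 = 1 :=
  weightCount_eq_one hS hammingNorm_zero fun _ _ => hammingNorm_eq_zero.1

lemma weightCount_eq_zero (hS : ∀ c ∈ S, hammingNorm c ≠ w) : weightCount S w = 0 := by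
  rw [weightCount, Set.ncard_eq_zero]
  exact Set.eq_empty_of_forall_notMem fun c hc => hS c hc.1 hc.2

lemma HasMinWeight.weightCount_eq_zero {d : ℕ} (hd : HasMinWeight S d) (hw : 0 < w)
    (hwd : w < d) : weightCount S w = 0 := by
  refine _root_.weightCount_eq_zero fun c hc hcw => hwd.not_ge (hd.2 ⟨c, hc, ?_, hcw⟩)
  exact hammingNorm_pos_iff.1 (hcw ▸ hw)

lemma sum_hammingNorm_eq_sum_weightCount {B : Submodule (ZMod 2) (Fin n → ZMod 2)} [Fintype B]
    {M : Type*} [AddCommMonoid M] {W : Finset ℕ} (hW : ∀ c ∈ B, hammingNorm c ∈ W) (g : ℕ → M) :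
    ∑ c : B, g (hammingNorm c.1) = ∑ w ∈ W, weightCount (B : Set (Fin n → ZMod 2)) w • g w := by
  rw [← sum_fiberwise_of_maps_to' (g := fun c : B => hammingNorm c.1) fun c _ => hW c c.2]
  refine sum_congr rfl fun w _ => ?_
  rw [sum_const, weightCount, ← Set.ncard_coe_finset,
    ← Set.ncard_image_of_injective _ Subtype.val_injective]
  refine congrArg (Set.ncard · • g w) (Set.ext fun c => ?_)
  simp [and_comm]

end WeightCount

section MacWilliams

variable {n : ℕ} (B : Submodule (ZMod 2) (Fin n → ZMod 2)) [Fintype B]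

lemma sum_signChar_dotProduct (x : Fin n → ZMod 2) [Decidable (x ∈ dualCode B)] :
    ∑ c : B, signChar (x ⬝ᵥ c.1) = if x ∈ dualCode B then (Fintype.card B : ℤ) else 0 := by
  classical
  let ψ : AddChar B ℤ := signChar.compAddMonoidHom
    ((dotProductBilin (ZMod 2) (ZMod 2) x).toAddMonoidHom.comp B.subtype.toAddMonoidHom)
  have ψ_eq_zero_iff : ψ = 0 ↔ x ∈ dualCode B := by
    rw [AddChar.eq_zero_iff]
    simp [ψ, signChar_eq_one_iff, dualCode, dotProduct]
  exact (AddChar.sum_eq_ite ψ).trans (by simp only [ψ_eq_zero_iff])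

theorem card_mul_weightCount_dualCode (j : ℕ) :
    (Fintype.card B : ℤ) * weightCount (dualCode B) j =
      ∑ c : B, krawtchouk n j (hammingNorm c.1) := by
  have : DecidablePred (· ∈ dualCode B) := Classical.decPred _
  calc (Fintype.card B : ℤ) * weightCount (dualCode B) j
      = ∑ x with hammingNorm x = j, ∑ c : B, signChar (x ⬝ᵥ c.1) := by
        simp only [sum_signChar_dotProduct]
        rw [← sum_filter, sum_const, filter_filter, weightCount_eq_card_filter, nsmul_eq_mul,
          mul_comm]
        simp only [and_comm]
    _ = ∑ c : B, krawtchouk n j (hammingNorm c.1) := by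
        rw [sum_comm]
        simp only [sum_signChar_dotProduct_filter_hammingNorm, Fintype.card_fin]

end MacWilliams

section PowerMoments

variable {n : ℕ} (B : Submodule (ZMod 2) (Fin n → ZMod 2)) [Fintype B]

theorem sum_length_sub_two_mul_hammingNorm :
    ∑ c : B, ((n : ℤ) - 2 * hammingNorm c.1) =
      (Fintype.card B : ℤ) * weightCount (dualCode B) 1 := by
  rw [card_mul_weightCount_dualCode]
  exact sum_congr rfl fun c _ => (krawtchouk_one (hammingNorm_le c.1)).symm

theorem sum_length_sub_two_mul_hammingNorm_sq :
    ∑ c : B, ((n : ℤ) - 2 * hammingNorm c.1) ^ 2 =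
      (Fintype.card B : ℤ) * (n + 2 * weightCount (dualCode B) 2) := by
  have second : ∑ c : B, (((n : ℤ) - 2 * hammingNorm c.1) ^ 2 - n) =
      2 * ((Fintype.card B : ℤ) * weightCount (dualCode B) 2) := by
    rw [card_mul_weightCount_dualCode, mul_sum]
    exact sum_congr rfl fun c _ => (two_mul_krawtchouk_two (hammingNorm_le c.1)).symm
  rw [sum_sub_distrib, sum_const, card_univ, nsmul_eq_mul] at second
  linear_combination second

theorem sum_length_sub_two_mul_hammingNorm_cube :
    ∑ c : B, ((n : ℤ) - 2 * hammingNorm c.1) ^ 3 =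
      (Fintype.card B : ℤ) *
        (6 * weightCount (dualCode B) 3 + (3 * n - 2) * weightCount (dualCode B) 1) := by
  have third : ∑ c : B, (((n : ℤ) - 2 * hammingNorm c.1) ^ 3
        - (3 * n - 2) * ((n : ℤ) - 2 * hammingNorm c.1)) =
      6 * ((Fintype.card B : ℤ) * weightCount (dualCode B) 3) := by
    rw [card_mul_weightCount_dualCode, mul_sum]
    exact sum_congr rfl fun c _ => (six_mul_krawtchouk_three (hammingNorm_le c.1)).symm
  rw [sum_sub_distrib, ← mul_sum, sum_length_sub_two_mul_hammingNorm] at third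
  linear_combination third

variable {B} in
theorem four_mul_sum_hammingNorm_sub_mul_sub (h₁ : weightCount (dualCode B) 1 = 0)
    (h₂ : weightCount (dualCode B) 2 = 0) (a b : ℤ) :
    4 * ∑ c : B, (hammingNorm c.1 - a) * (hammingNorm c.1 - b) =
      (Fintype.card B : ℤ) * ((n - 2 * a) * (n - 2 * b) + n) := by
  have first := sum_length_sub_two_mul_hammingNorm B
  have second := sum_length_sub_two_mul_hammingNorm_sq B
  rw [h₁, Nat.cast_zero, mul_zero] at first
  rw [h₂, Nat.cast_zero, mul_zero, add_zero] at second
  have expand (c : B) : 4 * (((hammingNorm c.1 : ℤ) - a) * (hammingNorm c.1 - b)) =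
      ((n : ℤ) - 2 * hammingNorm c.1) ^ 2
        - (2 * n - 2 * a - 2 * b) * ((n : ℤ) - 2 * hammingNorm c.1)
        + (n - 2 * a) * (n - 2 * b) := by
    ring
  rw [mul_sum, sum_congr rfl fun c _ => expand c, sum_add_distrib, sum_sub_distrib, ← mul_sum,
    first, second, sum_const, card_univ, nsmul_eq_mul]
  ring

end PowerMoments

section TwoWeights

lemma eq_zero_of_sum_le_add {ι M : Type*} [Fintype ι] [AddCommMonoid M] [PartialOrder M]
    [IsOrderedCancelAddMonoid M] {f : ι → M} (hf : ∀ i, 0 ≤ f i) {a b : ι} (hab : a ≠ b)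
    (hsum : ∑ i, f i ≤ f a + f b) {i : ι} (hia : i ≠ a) (hib : i ≠ b) : f i = 0 := by
  classical
  have sum_three := sum_le_univ_sum_of_nonneg hf (s := {a, b, i})
  rw [sum_insert (by simp [hab, hia.symm]), sum_pair hib.symm, ← add_assoc] at sum_three
  exact le_antisymm (add_le_iff_nonpos_right _ |>.1 (sum_three.trans hsum)) (hf i)

lemma sub_mul_sub_nonneg_of_notMem_Ioo {R : Type*} [CommRing R] [LinearOrder R]
    [IsStrictOrderedRing R] {a b w : R} (hab : a ≤ b) (hw : w ∉ Set.Ioo a b) :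
    0 ≤ (w - a) * (w - b) := by
  rcases le_or_gt w a with hwa | hwa
  · exact mul_nonneg_of_nonpos_of_nonpos (sub_nonpos.2 hwa) (sub_nonpos.2 (hwa.trans hab))
  · have hbw : b ≤ w := not_lt.1 fun hwb => hw ⟨hwa, hwb⟩
    exact mul_nonneg (sub_nonneg.2 hwa.le) (sub_nonneg.2 hbw)

-- `hle` says that the words `0` and `d` already exhaust the sum of the nonnegative numbers
-- `(wt c - a) * (wt c - b)`, which `four_mul_sum_hammingNorm_sub_mul_sub` evaluates.
theorem hammingNorm_eq_or_eq_of_card_mul_le {n : ℕ} {B : Submodule (ZMod 2) (Fin n → ZMod 2)}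
    [Fintype B] {a b : ℕ} (hab : a ≤ b) (hgap : ∀ c ∈ B, hammingNorm c ∉ Set.Ioo a b)
    (h₁ : weightCount (dualCode B) 1 = 0) (h₂ : weightCount (dualCode B) 2 = 0)
    {d : Fin n → ZMod 2} (hd : d ∈ B) (hd0 : d ≠ 0)
    (hle : (Fintype.card B : ℤ) * ((n - 2 * a) * (n - 2 * b) + n) ≤
      4 * (a * b + (hammingNorm d - a) * (hammingNorm d - b)))
    {c : Fin n → ZMod 2} (hc : c ∈ B) (hc0 : c ≠ 0) (hcd : c ≠ d) :
    hammingNorm c = a ∨ hammingNorm c = b := by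
  let f (c : B) : ℤ := (hammingNorm c.1 - a) * (hammingNorm c.1 - b)
  have f_nonneg (c : B) : 0 ≤ f c :=
    sub_mul_sub_nonneg_of_notMem_Ioo (by exact_mod_cast hab) (by simpa using hgap c c.2)
  have f_zero : f 0 = a * b := by simp [f]
  have sum_f : ∑ c, f c ≤ f 0 + f ⟨d, hd⟩ := by
    rw [← four_mul_sum_hammingNorm_sub_mul_sub h₁ h₂] at hle
    rw [f_zero]
    exact le_of_mul_le_mul_left hle four_pos
  have f_c : f ⟨c, hc⟩ = 0 :=
    eq_zero_of_sum_le_add f_nonneg (by simpa [Subtype.ext_iff] using hd0.symm) sum_f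
      (by simpa [Subtype.ext_iff] using hc0) (by simpa [Subtype.ext_iff] using hcd)
  simpa [f, sub_eq_zero] using f_c

end TwoWeights

section Length37

variable {B : Submodule (ZMod 2) (Fin 37 → ZMod 2)}

lemma weightCount_of_hammingNorm_mem [Fintype B] (hcard : Fintype.card B = 64)
    (hW : ∀ c ∈ B, hammingNorm c ∈ ({0, 12, 16, 20} : Finset ℕ))
    (h12 : weightCount (B : Set (Fin 37 → ZMod 2)) 12 = 1)
    (h₁ : weightCount (dualCode B) 1 = 0) :
    weightCount (B : Set (Fin 37 → ZMod 2)) 16 = 17 ∧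
      weightCount (B : Set (Fin 37 → ZMod 2)) 20 = 45 ∧ weightCount (dualCode B) 3 = 140 := by
  have sum_eq (g : ℕ → ℤ) : ∑ c : B, g (hammingNorm c.1) =
      g 0 + g 12 + weightCount (B : Set (Fin 37 → ZMod 2)) 16 * g 16 +
        weightCount (B : Set (Fin 37 → ZMod 2)) 20 * g 20 := by
    rw [sum_hammingNorm_eq_sum_weightCount hW]
    simp [weightCount_zero B.zero_mem, h12, add_assoc]
  have zeroth := sum_eq fun _ => 1
  have first := sum_eq fun w => ((37 : ℕ) : ℤ) - 2 * w
  have third := sum_eq fun w => (((37 : ℕ) : ℤ) - 2 * w) ^ 3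
  rw [sum_const, card_univ, hcard] at zeroth
  rw [sum_length_sub_two_mul_hammingNorm, h₁] at first
  rw [sum_length_sub_two_mul_hammingNorm_cube, hcard, h₁] at third
  lia

theorem weight_enumerator_37_6_12_general (hdim : Module.finrank (ZMod 2) B = 6)
    (hgap : ∀ c ∈ B, hammingNorm c ∉ Set.Ioo 16 20) (h12 : ∃ c ∈ B, hammingNorm c = 12)
    (h₁ : weightCount (dualCode B) 1 = 0) (h₂ : weightCount (dualCode B) 2 = 0) :
    (∀ w : ℕ, weightCount (B : Set (Fin 37 → ZMod 2)) w =
      if w = 0 then 1 else if w = 12 then 1 else if w = 16 then 17 else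
        if w = 20 then 45 else 0) ∧
      weightCount (dualCode B) 3 = 140 := by
  have := Fintype.ofFinite B
  have hcard : Fintype.card B = 64 := by
    rw [Module.card_eq_pow_finrank (K := ZMod 2), hdim, ZMod.card]; rfl
  obtain ⟨d, hd, hd12⟩ := h12
  have hd0 : d ≠ 0 := hammingNorm_pos_iff.1 (by lia)
  have weights {c} (hc : c ∈ B) (hc0 : c ≠ 0) (hcd : c ≠ d) :
      hammingNorm c = 16 ∨ hammingNorm c = 20 :=
    hammingNorm_eq_or_eq_of_card_mul_le (by lia) hgap h₁ h₂ hd hd0 (by simp [hcard, hd12])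
      hc hc0 hcd
  have hW : ∀ c ∈ B, hammingNorm c ∈ ({0, 12, 16, 20} : Finset ℕ) := by
    intro c hc
    by_cases hc0 : c = 0
    · simp [hc0]
    by_cases hcd : c = d
    · simp [hcd, hd12]
    rcases weights hc hc0 hcd with h | h <;> simp [h]
  have count_twelve : weightCount (B : Set (Fin 37 → ZMod 2)) 12 = 1 := by
    refine weightCount_eq_one hd hd12 fun c hc hc12 => by_contra fun hcd => ?_
    have := weights hc (hammingNorm_pos_iff.1 (by lia)) hcd
    lia
  obtain ⟨count_sixteen, count_twenty, count_dual⟩ :=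
    weightCount_of_hammingNorm_mem hcard hW count_twelve h₁
  refine ⟨fun w => ?_, count_dual⟩
  split_ifs with hw0 hw12 hw16 hw20
  · rw [hw0, weightCount_zero B.zero_mem]
  · rwa [hw12]
  · rwa [hw16]
  · rwa [hw20]
  · refine weightCount_eq_zero fun c hc hcw => ?_
    simpa [hcw, hw0, hw12, hw16, hw20] using hW c hc

end Length37

theorem weight_enumerator_37_6_12 {B : Submodule (ZMod 2) (Fin 37 → ZMod 2)}
    (hdim : Module.finrank (ZMod 2) B = 6)
    (hde : IsDoublyEven B)
    (hmin : HasMinWeight (B : Set (Fin 37 → ZMod 2)) 12)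
    (hdual : HasMinWeight (dualCode B) 3) :
    (∀ w : ℕ, weightCount (B : Set (Fin 37 → ZMod 2)) w =
      if w = 0 then 1 else if w = 12 then 1 else if w = 16 then 17 else
        if w = 20 then 45 else 0) ∧
      weightCount (dualCode B) 3 = 140 := by
  refine weight_enumerator_37_6_12_general hdim ?_ ?_
    (hdual.weightCount_eq_zero one_pos (by lia)) (hdual.weightCount_eq_zero two_pos (by lia))
  · rintro c hc ⟨hlt, hgt⟩
    have := hde c hc
    lia
  · obtain ⟨⟨c, hc, -, hc12⟩, -⟩ := hmin
    exact ⟨c, hc, hc12⟩
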